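/- There is an injective group homomorphism from ℤ × ℤ into Thompson's group V, the group of prefix replacement permutations of the Cantor set C = ℕ → Bool. -/

import Mathlib

/-!
Write `C = 0C ⊔ 1C`, so that `C ≃ C ⊕ C`. Reassociating `(C ⊕ C) ⊕ C ≃ C ⊕ (C ⊕ C)` yields a
permutation `cantorShift` of `C`, namely the element `00 ↦ 0, 01 ↦ 10, 1 ↦ 11` of Thompson's
group. It has infinite order, since its `n`-th power sends `1000…` to `1ⁿ⁺¹000…`. Letting one
copy of `ℤ` act on `0C` and the other on `1C` through powers of this permutation embeds `ℤ × ℤ`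
into the permutations of `C`.

To see that the image consists of prefix replacement maps, call a permutation `g` *uniformly
local* if every sufficiently long word `w` has a `g`-image word `u`, i.e. `g (w⌢ξ) = u⌢ξ` for all
`ξ`. Unlike the definition through antichains, this property is visibly stable under products and
under gluing along `C = 0C ⊔ 1C`. It implies prefix replacement
(`UniformlyLocal.isPrefixReplacement`): take all words of one large length as the domain
antichain; injectivity of `g` makes their image words an antichain and surjectivity makes that
antichain complete.
-/

/-- The Cantor set `C = ℕ → Bool`. -/
abbrev Cantor : Type := ℕ → Bool

/-- Prepend a finite word `a` to an element `ξ` of the Cantor set. -/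
def prepend (a : List Bool) (ξ : Cantor) : Cantor :=
  fun n => if h : n < a.length then a.get ⟨n, h⟩ else ξ (n - a.length)

/-- A finite set of finite binary words is a complete antichain if distinct elements
are incomparable in the prefix order and every `ξ : ℕ → Bool` has an initial segment
lying in it. -/
def IsCompleteAntichain (A : Set (List Bool)) : Prop :=
  A.Finite ∧
  (∀ a ∈ A, ∀ b ∈ A, a ≠ b → ¬ a <+: b) ∧
  (∀ ξ : Cantor, ∃ n : ℕ, (List.ofFn fun i : Fin n => ξ i) ∈ A)

/-- A permutation of the Cantor set is a prefix replacement map if it is given by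
a bijection between two finite complete antichains of prefixes. -/
def IsPrefixReplacement (g : Equiv.Perm Cantor) : Prop :=
  ∃ A B : Set (List Bool), IsCompleteAntichain A ∧ IsCompleteAntichain B ∧
    ∃ σ : A ≃ B, ∀ (a : A) (ξ : Cantor), g (prepend a ξ) = prepend (σ a : List Bool) ξ

/-! ### Prepending words -/

theorem prepend_nil (ξ : Cantor) : prepend [] ξ = ξ := by
  funext n; simp [prepend]

theorem prepend_append (a b : List Bool) (ξ : Cantor) :
    prepend (a ++ b) ξ = prepend a (prepend b ξ) := by
  funext n
  simp only [prepend, List.length_append, List.get_eq_getElem, List.getElem_append]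
  split_ifs <;> first | rfl | omega | (congr 1; omega)

theorem prepend_cons (b : Bool) (w : List Bool) (ξ : Cantor) :
    prepend (b :: w) ξ = prepend [b] (prepend w ξ) :=
  prepend_append [b] w ξ

theorem ofFn_prepend (a : List Bool) (ξ : Cantor) :
    (List.ofFn fun i : Fin a.length => prepend a ξ i) = a := by
  apply List.ext_getElem <;> simp [prepend]

theorem prepend_ofFn (n : ℕ) (ξ : Cantor) :
    prepend (List.ofFn fun i : Fin n => ξ i) (fun k => ξ (k + n)) = ξ := by
  funext k
  simp only [prepend, List.length_ofFn, List.get_eq_getElem, List.getElem_ofFn]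
  split_ifs with h
  · rfl
  · congr 1; omega

theorem prepend_left_injective {a b : List Bool} (hl : a.length = b.length) {ξ η : Cantor}
    (h : prepend a ξ = prepend b η) : a = b := by
  rw [← ofFn_prepend a ξ, h, hl, ofFn_prepend]

/-! ### Uniformly local permutations -/

/-- A permutation of the Cantor set is uniformly local if it acts as a replacement of prefixes on
the cone of every sufficiently long word. -/
def UniformlyLocal (g : Equiv.Perm Cantor) : Prop :=
  ∃ N : ℕ, ∀ w : List Bool, N ≤ w.length → ∃ u : List Bool, ∀ ξ, g (prepend w ξ) = prepend u ξ

theorem UniformlyLocal.isPrefixReplacement {g : Equiv.Perm Cantor} (hg : UniformlyLocal g) :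
    IsPrefixReplacement g := by
  obtain ⟨N, hN⟩ := hg
  let A : Set (List Bool) := {w | w.length = N}
  have hA : ∀ a : A, ∃ u : List Bool, ∀ ξ, g (prepend a ξ) = prepend u ξ :=
    fun a => hN a a.2.ge
  choose u hu using hA
  have key : ∀ a b : A, u a <+: u b → a = b := by
    rintro a b ⟨t, ht⟩
    have h : g (prepend b fun _ => false) = g (prepend a (prepend t fun _ => false)) := by
      rw [hu, hu, ← ht, prepend_append]
    exact Subtype.ext (prepend_left_injective (b.2.trans a.2.symm) (g.injective h)).symm
  have hinj : Function.Injective u := fun a b h => key a b (h ▸ List.prefix_rfl)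
  have hAfin : A.Finite := List.finite_length_eq Bool N
  have : Finite A := hAfin
  refine ⟨A, Set.range u, ⟨hAfin, ?_, fun ξ => ⟨N, by simp [A]⟩⟩,
    ⟨Set.finite_range u, ?_, ?_⟩, Equiv.ofInjective u hinj, fun a ξ => by simp [hu]⟩
  · intro a ha b hb hab h
    exact hab (h.eq_of_length (ha.trans hb.symm))
  · rintro _ ⟨a, rfl⟩ _ ⟨b, rfl⟩ hab h
    exact hab (congrArg u (key a b h))
  · intro ξ
    let a : A := ⟨List.ofFn fun i : Fin N => g.symm ξ i, by simp [A]⟩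
    have h : ξ = prepend (u a) (fun k => g.symm ξ (k + N)) := by
      rw [← hu, prepend_ofFn, Equiv.apply_symm_apply]
    refine ⟨(u a).length, a, ?_⟩
    conv_rhs => rw [h]
    exact (ofFn_prepend _ _).symm

theorem UniformlyLocal.one : UniformlyLocal 1 := ⟨0, fun w _ => ⟨w, fun _ => rfl⟩⟩

theorem UniformlyLocal.mul {g h : Equiv.Perm Cantor} (hg : UniformlyLocal g)
    (hh : UniformlyLocal h) : UniformlyLocal (g * h) := by
  obtain ⟨M, hM⟩ := hg
  obtain ⟨N, hN⟩ := hh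
  refine ⟨N + M, fun w hw => ?_⟩
  obtain ⟨u, hu⟩ := hN (w.take N) (by simp; omega)
  -- the `M` letters left over after the first `N` make the intermediate word long enough for `g`
  obtain ⟨v, hv⟩ := hM (u ++ w.drop N) (by simp; omega)
  refine ⟨v, fun ξ => ?_⟩
  rw [← hv, Equiv.Perm.mul_apply]
  conv_lhs => rw [← List.take_append_drop N w, prepend_append, hu]
  rw [prepend_append]

theorem UniformlyLocal.pow {g : Equiv.Perm Cantor} (hg : UniformlyLocal g) (n : ℕ) :
    UniformlyLocal (g ^ n) := by
  induction n with
  | zero => exact .one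
  | succ n ih => exact pow_succ g n ▸ ih.mul hg

theorem UniformlyLocal.zpow {g : Equiv.Perm Cantor} (hg : UniformlyLocal g)
    (hg' : UniformlyLocal g⁻¹) (n : ℤ) : UniformlyLocal (g ^ n) := by
  obtain ⟨k, rfl | rfl⟩ := n.eq_nat_or_neg
  · exact zpow_natCast g k ▸ hg.pow k
  · rw [zpow_neg, zpow_natCast, ← inv_pow]
    exact hg'.pow k

/-! ### Splitting the Cantor set into two cones -/

/-- The decomposition `C = 0C ⊔ 1C`: the left summand is the cone of `0` and the right summand is
the cone of `1`. -/
def cantorSplit : Cantor ⊕ Cantor ≃ Cantor where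
  toFun := Sum.elim (prepend [false]) (prepend [true])
  invFun ξ := bif ξ 0 then .inr (fun n => ξ (n + 1)) else .inl (fun n => ξ (n + 1))
  left_inv := by rintro (ξ | ξ) <;> simp [prepend]
  right_inv ξ := by
    cases h : ξ 0 <;> funext n <;> cases n <;> simp [prepend, h]

theorem cantorSplit_symm_false (ξ : Cantor) :
    cantorSplit.symm (prepend [false] ξ) = .inl ξ :=
  cantorSplit.symm_apply_apply (.inl ξ)

theorem cantorSplit_symm_true (ξ : Cantor) :
    cantorSplit.symm (prepend [true] ξ) = .inr ξ :=
  cantorSplit.symm_apply_apply (.inr ξ)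

/-- Let a pair of permutations act on the cones of `0` and `1` respectively. -/
def glue : Equiv.Perm Cantor × Equiv.Perm Cantor →* Equiv.Perm Cantor :=
  cantorSplit.permCongrHom.toMonoidHom.comp (Equiv.Perm.sumCongrHom Cantor Cantor)

theorem glue_injective : Function.Injective glue :=
  cantorSplit.permCongrHom.injective.comp Equiv.Perm.sumCongrHom_injective

theorem glue_false (p : Equiv.Perm Cantor × Equiv.Perm Cantor) (ξ : Cantor) :
    glue p (prepend [false] ξ) = prepend [false] (p.1 ξ) := by
  have h : glue p (prepend [false] ξ) =
      cantorSplit (Equiv.sumCongr p.1 p.2 (cantorSplit.symm (prepend [false] ξ))) := rfl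
  rw [h, cantorSplit_symm_false]; rfl

theorem glue_true (p : Equiv.Perm Cantor × Equiv.Perm Cantor) (ξ : Cantor) :
    glue p (prepend [true] ξ) = prepend [true] (p.2 ξ) := by
  have h : glue p (prepend [true] ξ) =
      cantorSplit (Equiv.sumCongr p.1 p.2 (cantorSplit.symm (prepend [true] ξ))) := rfl
  rw [h, cantorSplit_symm_true]; rfl

theorem UniformlyLocal.glue {g h : Equiv.Perm Cantor} (hg : UniformlyLocal g)
    (hh : UniformlyLocal h) : UniformlyLocal (glue (g, h)) := by
  obtain ⟨M, hM⟩ := hg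
  obtain ⟨N, hN⟩ := hh
  refine ⟨M + N + 1, fun w hw => ?_⟩
  match w, hw with
  | false :: w, hw =>
    obtain ⟨u, hu⟩ := hM w (by simp at hw; omega)
    exact ⟨false :: u, fun ξ => by rw [prepend_cons, glue_false, hu, ← prepend_cons]⟩
  | true :: w, hw =>
    obtain ⟨u, hu⟩ := hN w (by simp at hw; omega)
    exact ⟨true :: u, fun ξ => by rw [prepend_cons, glue_true, hu, ← prepend_cons]⟩

/-! ### An element of infinite order -/

/-- The prefix replacement `00 ↦ 0, 01 ↦ 10, 1 ↦ 11`, obtained from the associativity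
`(C ⊕ C) ⊕ C ≃ C ⊕ (C ⊕ C)`. -/
def cantorShift : Equiv.Perm Cantor :=
  cantorSplit.symm.trans <| (Equiv.sumCongr cantorSplit.symm (Equiv.refl _)).trans <|
    (Equiv.sumAssoc _ _ _).trans <| (Equiv.sumCongr (Equiv.refl _) cantorSplit).trans cantorSplit

theorem cantorShift_false_false (ξ : Cantor) :
    cantorShift (prepend [false] (prepend [false] ξ)) = prepend [false] ξ := by
  simp only [cantorShift, Equiv.trans_apply, cantorSplit_symm_false, Equiv.sumCongr_apply,
    Sum.map_inl]
  rfl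

theorem cantorShift_false_true (ξ : Cantor) :
    cantorShift (prepend [false] (prepend [true] ξ)) = prepend [true] (prepend [false] ξ) := by
  simp only [cantorShift, Equiv.trans_apply, cantorSplit_symm_false, cantorSplit_symm_true,
    Equiv.sumCongr_apply, Sum.map_inl]
  rfl

theorem cantorShift_true (ξ : Cantor) :
    cantorShift (prepend [true] ξ) = prepend [true] (prepend [true] ξ) := by
  simp only [cantorShift, Equiv.trans_apply, cantorSplit_symm_true]
  rfl

theorem uniformlyLocal_cantorShift : UniformlyLocal cantorShift := by
  refine ⟨2, fun w hw => ?_⟩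
  match w, hw with
  | false :: false :: w, _ =>
    exact ⟨false :: w, fun ξ => by
      rw [prepend_cons, prepend_cons false w, cantorShift_false_false]⟩
  | false :: true :: w, _ =>
    exact ⟨true :: false :: w, fun ξ => by
      rw [prepend_cons, prepend_cons true w, cantorShift_false_true, ← prepend_append,
        ← prepend_append]
      rfl⟩
  | true :: c :: w, _ =>
    exact ⟨true :: true :: c :: w, fun ξ => by
      rw [prepend_cons, cantorShift_true, ← prepend_append, ← prepend_append]
      rfl⟩

theorem uniformlyLocal_cantorShift_inv : UniformlyLocal cantorShift⁻¹ := by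
  refine ⟨2, fun w hw => ?_⟩
  match w, hw with
  | false :: c :: w, _ =>
    exact ⟨false :: false :: c :: w, fun ξ => by
      rw [Equiv.Perm.inv_eq_iff_eq, prepend_cons, prepend_cons false (false :: _),
        prepend_cons false (c :: w), cantorShift_false_false]⟩
  | true :: false :: w, _ =>
    exact ⟨false :: true :: w, fun ξ => by
      rw [Equiv.Perm.inv_eq_iff_eq, prepend_cons, prepend_cons false (true :: w),
        prepend_cons true w, cantorShift_false_true, prepend_cons false w]⟩
  | true :: true :: w, _ =>
    exact ⟨true :: w, fun ξ => by
      rw [Equiv.Perm.inv_eq_iff_eq, prepend_cons, prepend_cons true w, cantorShift_true]⟩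

theorem cantorShift_pow_true (n : ℕ) (ξ : Cantor) :
    (cantorShift ^ n) (prepend [true] ξ) = prepend (List.replicate (n + 1) true) ξ := by
  induction n with
  | zero => rfl
  | succ n ih =>
    rw [pow_succ', Equiv.Perm.mul_apply, ih, List.replicate_succ, prepend_cons, cantorShift_true,
      ← prepend_append, ← prepend_append]
    rfl

theorem not_isOfFinOrder_cantorShift : ¬ IsOfFinOrder cantorShift := by
  rw [isOfFinOrder_iff_pow_eq_one]
  rintro ⟨n, hn, h⟩
  have h1 := cantorShift_pow_true n fun _ => false
  rw [h] at h1
  -- `1000…` and `1ⁿ⁺¹000…` differ at position `n`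
  have h2 := congrFun h1 n
  simp [prepend, hn.ne'] at h2

/-- There is an injective group homomorphism from `ℤ × ℤ` into Thompson's group `V`,
the group of prefix replacement permutations of the Cantor set. -/
theorem Z_times_Z_embeds_in_V :
    ∃ φ : Multiplicative (ℤ × ℤ) →* Equiv.Perm Cantor,
      Function.Injective φ ∧ ∀ x, IsPrefixReplacement (φ x) := by
  have hinj : Function.Injective (zpowersHom _ cantorShift) := fun m n h =>
    injective_zpow_iff_not_isOfFinOrder.2 not_isOfFinOrder_cantorShift h
  refine ⟨(glue.comp ((zpowersHom _ cantorShift).prodMap (zpowersHom _ cantorShift))).comp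
    (MulEquiv.prodMultiplicative ℤ ℤ).toMonoidHom, ?_, fun x => ?_⟩
  · exact (glue_injective.comp (hinj.prodMap hinj)).comp
      (MulEquiv.prodMultiplicative ℤ ℤ).injective
  · exact (UniformlyLocal.glue
      (uniformlyLocal_cantorShift.zpow uniformlyLocal_cantorShift_inv x.toAdd.1)
      (uniformlyLocal_cantorShift.zpow uniformlyLocal_cantorShift_inv
        x.toAdd.2)).isPrefixReplacement
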